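/- Let n ≥ 0 be an integer and write 3n+2 = ∏_{i=1}^{s} p_i^{α_i} as its prime factorization into distinct primes p_i with exponents α_i ≥ 1. Then 3·A_3(n)·∏_{i=1}^{s}(p_i − 1) = ∏_{i=1}^{s}(p_i^{α_i+1} − 1), i.e., A_3(n) = (1/3)·∏_{i=1}^{s} (p_i^{α_i+1} − 1)/(p_i − 1). -/

import Mathlib

/-- The hook length of the cell `(i, j)` in a Young diagram `μ`:
arm length + leg length + 1. -/
def YoungDiagram.hookLength (μ : YoungDiagram) (i j : ℕ) : ℕ :=
  μ.rowLen i + μ.colLen j - i - j - 1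

/-- A Young diagram (equivalently, a partition) is a 3-core if none of its
hook numbers is divisible by 3. -/
def YoungDiagram.IsThreeCore (μ : YoungDiagram) : Prop :=
  ∀ c ∈ μ.cells, ¬ (3 ∣ μ.hookLength c.1 c.2)

/-- `a3 n` is the number of 3-core partitions of `n`. -/
noncomputable def a3 (n : ℕ) : ℕ :=
  Nat.card {μ : YoungDiagram // μ.card = n ∧ μ.IsThreeCore}

/-- `A3 n` is the number of partition pairs of `n` in which each partition is a 3-core. -/
noncomputable def A3 (n : ℕ) : ℕ :=
  Nat.card {p : YoungDiagram × YoungDiagram //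
    p.1.card + p.2.card = n ∧ p.1.IsThreeCore ∧ p.2.IsThreeCore}

/-- `B3 n` is the number of partition triples of `n` in which each partition is a 3-core. -/
noncomputable def B3 (n : ℕ) : ℕ :=
  Nat.card {p : YoungDiagram × YoungDiagram × YoungDiagram //
    p.1.card + p.2.1.card + p.2.2.card = n ∧
    p.1.IsThreeCore ∧ p.2.1.IsThreeCore ∧ p.2.2.IsThreeCore}

/-!
The first-column hook lengths of a 3-core are the first `a` integers `≡ 1` and the first `b`
integers `≡ 2` modulo `3`, and the size `c` of the core satisfies `3 * c + 1 = N(z)` for an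
Eisenstein integer `z` depending linearly on `a` and `b`. Up to the six units these `z` are all the
Eisenstein integers prime to `√-3`. As norms are `0` or `1` modulo `3`, a sum of two norms is
`3 * n + 2` only if both are `1` modulo `3`, so `36 * A₃(n)` is the number of elements of reduced
norm `3 * n + 2` in the quaternion order `ℤ[ω] ⊕ ℤ[ω] j`, `j ^ 2 = -1`.

This order is Euclidean, hence its left ideals are principal, and modulo a prime `p ≠ 3` it becomes
`M₂(𝔽_p)`. The elements of norm `p * m` killing a fixed line of `𝔽_p²` modulo `p` are the left
multiples of a generator of norm `p`, so they correspond to the elements of norm `m`. An element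
of norm `p * m` kills exactly one of the `p + 1` lines, or all of them if it is divisible by `p`.
Double counting gives the recursion `r(p m) + p r(m / p) = (p + 1) r(m)`, which `σ` satisfies as
well; since there are `12` units, `r(m) = 12 σ(m)` for `m` prime to `3`.
-/

open Finset Matrix Quaternion
open scoped LinearAlgebra.Projectivization ArithmeticFunction.sigma

theorem isPrincipalIdealRing_of_exists_sub_mul_lt {R : Type*} [Ring R] (size : R → ℕ)
    (hsize : ∀ a b : R, b ≠ 0 → ∃ q, size (a - q * b) < size b) : IsPrincipalIdealRing R := by
  refine ⟨fun I => ?_⟩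
  rcases eq_or_ne I ⊥ with rfl | hI
  · infer_instance
  obtain ⟨b, ⟨hbI, hb0⟩, hmin⟩ :=
    (measure size).wf.has_min {b | b ∈ I ∧ b ≠ 0} (I.ne_bot_iff.1 hI)
  refine ⟨b, le_antisymm (fun a haI => ?_) ((Ideal.span_singleton_le_iff_mem I).2 hbI)⟩
  obtain ⟨q, hq⟩ := hsize a b hb0
  have hremainder : a - q * b = 0 := by
    by_contra hne
    exact hmin _ ⟨I.sub_mem haI (I.mul_mem_left q hbI), hne⟩ hq
  exact Ideal.mem_span_singleton'.2 ⟨q, (sub_eq_zero.1 hremainder).symm⟩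

section ReducedNorm

variable {R : Type*} [CommRing R] {c₁ c₂ c₃ : R}

/-- The reduced norm `q * star q` of a quaternion algebra, as a multiplicative map. -/
def reducedNorm : ℍ[R,c₁,c₂,c₃] →*₀ R where
  toFun q := q.re ^ 2 + c₂ * q.re * q.imI - c₁ * q.imI ^ 2
    - c₃ * (q.imJ ^ 2 + c₂ * q.imJ * q.imK - c₁ * q.imK ^ 2)
  map_zero' := by simp
  map_one' := by simp
  map_mul' q r := by
    simp only [QuaternionAlgebra.re_mul, QuaternionAlgebra.imI_mul, QuaternionAlgebra.imJ_mul,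
      QuaternionAlgebra.imK_mul]
    ring

theorem reducedNorm_apply (q : ℍ[R,c₁,c₂,c₃]) :
    reducedNorm q = q.re ^ 2 + c₂ * q.re * q.imI - c₁ * q.imI ^ 2
      - c₃ * (q.imJ ^ 2 + c₂ * q.imJ * q.imK - c₁ * q.imK ^ 2) := rfl

theorem reducedNorm_star (q : ℍ[R,c₁,c₂,c₃]) : reducedNorm (star q) = reducedNorm q := by
  simp only [reducedNorm_apply, QuaternionAlgebra.re_star, QuaternionAlgebra.imI_star,
    QuaternionAlgebra.imJ_star, QuaternionAlgebra.imK_star]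
  ring

theorem mul_star_eq_reducedNorm_smul_one (q : ℍ[R,c₁,c₂,c₃]) :
    q * star q = reducedNorm q • 1 := by
  ext <;> simp [reducedNorm_apply] <;> ring

theorem star_mul_eq_reducedNorm_smul_one (q : ℍ[R,c₁,c₂,c₃]) :
    star q * q = reducedNorm q • 1 := by
  rw [← reducedNorm_star, ← mul_star_eq_reducedNorm_smul_one, star_star]

theorem reducedNorm_natCast (n : ℕ) : reducedNorm (n : ℍ[R,c₁,c₂,c₃]) = (n : R) ^ 2 := by
  simp [reducedNorm_apply]

end ReducedNorm

theorem exists_sq_two_mul_sub_mul_le {n : ℤ} (hn : 0 < n) (x : ℤ) :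
    ∃ q, (2 * (x - n * q)) ^ 2 ≤ n ^ 2 := by
  have hdiv := Int.mul_ediv_add_emod (2 * x + n) (2 * n)
  have hnonneg := Int.emod_nonneg (2 * x + n) (by lia : 2 * n ≠ 0)
  have hlt := Int.emod_lt_of_pos (2 * x + n) (by lia : 0 < 2 * n)
  refine ⟨(2 * x + n) / (2 * n), sq_le_sq' ?_ ?_⟩ <;> linarith

/-- The Eisenstein integers `ℤ[ω]`, with `ω ^ 2 = -1 - ω`. -/
abbrev EisensteinInt := QuadraticAlgebra ℤ (-1) (-1)

namespace EisensteinInt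

theorem norm_eq (z : EisensteinInt) : z.norm = z.re ^ 2 - z.re * z.im + z.im ^ 2 := by
  rw [QuadraticAlgebra.norm_def]
  ring

theorem exists_two_mul_norm_sub_smul_lt {n : ℤ} (hn : 0 < n) (z : EisensteinInt) :
    ∃ q : EisensteinInt, 2 * (z - n • q).norm < n ^ 2 := by
  obtain ⟨r, hr⟩ := exists_sq_two_mul_sub_mul_le hn z.im
  obtain ⟨q, hq⟩ := exists_sq_two_mul_sub_mul_le (by lia : 0 < 2 * n) (2 * z.re - (z.im - n * r))
  refine ⟨⟨q, r⟩, ?_⟩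
  simp only [norm_eq, QuadraticAlgebra.re_sub, QuadraticAlgebra.im_sub, QuadraticAlgebra.re_smul,
    QuadraticAlgebra.im_smul, smul_eq_mul]
  nlinarith

end EisensteinInt

/-- The quaternion order `ℤ[ω] ⊕ ℤ[ω] j` with `ω ^ 2 = -1 - ω` and `j ^ 2 = -1`: a maximal order
in the rational quaternion algebra ramified exactly at `3` and `∞`. -/
abbrev EisensteinQuaternion := ℍ[ℤ,-1,-1,-1]

namespace EisensteinQuaternion

/-- The decomposition `ℤ[ω] ⊕ ℤ[ω] j` of the order. -/
def equivEisensteinProd : EisensteinQuaternion ≃ EisensteinInt × EisensteinInt where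
  toFun g := (⟨g.re, g.imI⟩, ⟨g.imJ, g.imK⟩)
  invFun z := ⟨z.1.re, z.1.im, z.2.re, z.2.im⟩
  left_inv _ := rfl
  right_inv _ := rfl

theorem reducedNorm_equivEisensteinProd_symm (z : EisensteinInt × EisensteinInt) :
    reducedNorm (equivEisensteinProd.symm z) = z.1.norm + z.2.norm := by
  simp only [reducedNorm_apply, equivEisensteinProd, Equiv.coe_fn_symm_mk, EisensteinInt.norm_eq]
  ring

theorem three_mul_sq_le_four_mul_reducedNorm (g : EisensteinQuaternion) :
    3 * g.re ^ 2 ≤ 4 * reducedNorm g ∧ 3 * g.imI ^ 2 ≤ 4 * reducedNorm g ∧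
      3 * g.imJ ^ 2 ≤ 4 * reducedNorm g ∧ 3 * g.imK ^ 2 ≤ 4 * reducedNorm g := by
  rw [reducedNorm_apply]
  refine ⟨?_, ?_, ?_, ?_⟩ <;>
  nlinarith [sq_nonneg (2 * g.re - g.imI), sq_nonneg (2 * g.imI - g.re),
    sq_nonneg (2 * g.imJ - g.imK), sq_nonneg (2 * g.imK - g.imJ), sq_nonneg g.re,
    sq_nonneg g.imI, sq_nonneg g.imJ, sq_nonneg g.imK]

theorem reducedNorm_nonneg (g : EisensteinQuaternion) : 0 ≤ reducedNorm g := by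
  linarith [(three_mul_sq_le_four_mul_reducedNorm g).1, sq_nonneg g.re]

theorem reducedNorm_eq_zero {g : EisensteinQuaternion} : reducedNorm g = 0 ↔ g = 0 := by
  refine ⟨fun hg => ?_, fun hg => by rw [hg, map_zero]⟩
  have hbound := three_mul_sq_le_four_mul_reducedNorm g
  rw [hg] at hbound
  ext <;> refine pow_eq_zero_iff two_ne_zero |>.1 (le_antisymm ?_ (sq_nonneg _)) <;> lia

instance : NoZeroDivisors EisensteinQuaternion where
  eq_zero_or_eq_zero_of_mul_eq_zero {g h} hgh := by
    rwa [← reducedNorm_eq_zero, ← reducedNorm_eq_zero, ← mul_eq_zero, ← map_mul,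
      reducedNorm_eq_zero]

theorem exists_reducedNorm_sub_mul_lt (g : EisensteinQuaternion) {h : EisensteinQuaternion}
    (hh : h ≠ 0) : ∃ q, reducedNorm (g - q * h) < reducedNorm h := by
  have hpos : 0 < reducedNorm h := (reducedNorm_nonneg h).lt_of_ne' (reducedNorm_eq_zero.not.2 hh)
  obtain ⟨u, hu⟩ := EisensteinInt.exists_two_mul_norm_sub_smul_lt hpos
    (equivEisensteinProd (g * star h)).1
  obtain ⟨v, hv⟩ := EisensteinInt.exists_two_mul_norm_sub_smul_lt hpos
    (equivEisensteinProd (g * star h)).2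
  set q := equivEisensteinProd.symm (u, v)
  have hround : 2 * reducedNorm (g * star h - reducedNorm h • q) < 2 * reducedNorm h ^ 2 := by
    have hsplit := reducedNorm_equivEisensteinProd_symm
      (equivEisensteinProd (g * star h) - reducedNorm h • (u, v))
    calc _ = _ := congrArg (2 * ·) hsplit
      _ < _ := by simp only [Prod.fst_sub, Prod.snd_sub, Prod.smul_fst, Prod.smul_snd]; lia
  have hmul : (g - q * h) * star h = g * star h - reducedNorm h • q := by
    rw [sub_mul, mul_assoc, mul_star_eq_reducedNorm_smul_one, mul_smul_comm, mul_one]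
  rw [← hmul, map_mul, reducedNorm_star] at hround
  exact ⟨q, by nlinarith⟩

instance : IsPrincipalIdealRing EisensteinQuaternion :=
  isPrincipalIdealRing_of_exists_sub_mul_lt (fun g => (reducedNorm g).toNat) fun g h hh => by
    obtain ⟨q, hq⟩ := exists_reducedNorm_sub_mul_lt g hh
    exact ⟨q, (Int.toNat_lt_toNat ((reducedNorm_nonneg _).trans_lt hq)).2 hq⟩

/-- The elements of reduced norm `m`, cut out of a box that contains all of them
(`mem_normSphere`). -/
noncomputable def normSphere (m : ℕ) : Finset EisensteinQuaternion :=
  let I : Finset ℤ := Icc (-m) m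
  ((I ×ˢ I ×ˢ I ×ˢ I).map (QuaternionAlgebra.equivProd (-1) (-1) (-1)).symm.toEmbedding).filter
    (reducedNorm · = (m : ℤ))

theorem mem_normSphere {m : ℕ} {g : EisensteinQuaternion} :
    g ∈ normSphere m ↔ reducedNorm g = m := by
  have mem_Icc_of_le {x : ℤ} (hx : 3 * x ^ 2 ≤ 4 * m) : x ∈ Icc (-m : ℤ) m := by
    rw [mem_Icc, ← abs_le]
    refine Int.lt_add_one_iff.1 (abs_lt_of_sq_lt_sq ?_ (by positivity))
    nlinarith
  simp only [normSphere, mem_filter, and_iff_right_iff_imp]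
  intro hg
  obtain ⟨hre, hI, hJ, hK⟩ := hg ▸ three_mul_sq_le_four_mul_reducedNorm g
  rw [mem_map_equiv, Equiv.symm_symm]
  simp only [QuaternionAlgebra.equivProd, Equiv.coe_fn_mk, mem_product]
  exact ⟨mem_Icc_of_le hre, mem_Icc_of_le hI, mem_Icc_of_le hJ, mem_Icc_of_le hK⟩

theorem card_normSphere_one : #(normSphere 1) = 12 := by
  decide +kernel

end EisensteinQuaternion

theorem existsUnique_mulVec_rep_eq_zero {K : Type*} [Field K] {M : Matrix (Fin 2) (Fin 2) K}
    (hdet : M.det = 0) (hM : M ≠ 0) : ∃! ℓ : ℙ K (Fin 2 → K), M *ᵥ ℓ.rep = 0 := by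
  obtain ⟨v, hv0, hv⟩ := exists_mulVec_eq_zero_iff.2 hdet
  obtain ⟨a, ha⟩ := Projectivization.exists_smul_eq_mk_rep K v hv0
  have hrep : M *ᵥ (Projectivization.mk K v hv0).rep = 0 := by
    rw [← ha, mulVec_smul, hv, smul_zero]
  refine ⟨.mk K v hv0, hrep, fun ℓ hℓ => by_contra fun hne => hM ?_⟩
  have hspan := (Projectivization.independent_iff.1
    ((Projectivization.independent_pair_iff_ne _ _).2 hne)).span_eq_top_of_card_eq_finrank'
    (by simp)
  exact (toLin' (R := K)).map_eq_zero_iff.1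
    (LinearMap.ext_on_range hspan (Fin.forall_fin_two.2 ⟨hℓ, hrep⟩))

section Splitting

variable {K : Type*} [Field K]

theorem exists_sq_add_mul_add_sq_eq_neg_one [Finite K] (h3 : (3 : K) ≠ 0) :
    ∃ a b : K, a ^ 2 + a * b + b ^ 2 = -1 := by
  have := Fintype.ofFinite K
  by_cases h2 : (2 : K) = 0
  · exact ⟨1, 0, by linear_combination h2⟩
  have hodd : Fintype.card K % 2 = 1 := FiniteField.odd_card_of_char_ne_two fun hchar =>
    h2 (by exact_mod_cast hchar ▸ ringChar.Nat.cast_ringChar (R := K))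
  obtain ⟨u, v, huv⟩ : ∃ u v : K, u ^ 2 + 4 + 3 * v ^ 2 = 0 := by
    open Polynomial in
    simpa using FiniteField.exists_root_sum_quadratic
      (f := C 1 * X ^ 2 + C 0 * X + C (4 : K)) (g := C 3 * X ^ 2 + C 0 * X + C 0)
      (degree_quadratic one_ne_zero) (degree_quadratic h3) hodd
  refine ⟨(u - v) / 2, v, ?_⟩
  field_simp
  linear_combination huv

/-- Matrices over `K` that multiply like the generators `ω`, `j`, `ω j`. -/
def matrixQuaternionBasis {a b : K} (hab : a ^ 2 + a * b + b ^ 2 = -1) :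
    QuaternionAlgebra.Basis (Matrix (Fin 2) (Fin 2) K) (-1 : K) (-1) (-1) where
  i := !![0, -1; 1, -1]
  j := !![a, b; a + b, -a]
  k := !![-(a + b), a; -b, a + b]
  i_mul_i := by ext i j; fin_cases i <;> fin_cases j <;> simp
  j_mul_j := by ext i j; fin_cases i <;> fin_cases j <;> simp <;> grind
  i_mul_j := by ext i j; fin_cases i <;> fin_cases j <;> simp [add_comm]
  j_mul_i := by ext i j; fin_cases i <;> fin_cases j <;> simp [sub_eq_add_neg, add_comm]

theorem matrixQuaternionBasis_liftHom_apply {a b : K} (hab : a ^ 2 + a * b + b ^ 2 = -1)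
    (q : ℍ[K,-1,-1,-1]) :
    (matrixQuaternionBasis hab).liftHom q =
      !![q.re + a * q.imJ - (a + b) * q.imK, -q.imI + b * q.imJ + a * q.imK;
        q.imI + (a + b) * q.imJ - b * q.imK, q.re - q.imI - a * q.imJ + (a + b) * q.imK] := by
  ext i j
  fin_cases i <;> fin_cases j <;>
    simp [QuaternionAlgebra.Basis.lift, matrixQuaternionBasis, algebraMap_matrix_apply] <;> ring

theorem matrixQuaternionBasis_liftHom_injective (h3 : (3 : K) ≠ 0) {a b : K}
    (hab : a ^ 2 + a * b + b ^ 2 = -1) :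
    Function.Injective (matrixQuaternionBasis hab).liftHom := by
  refine (injective_iff_map_eq_zero _).2 fun q hq => ?_
  rw [matrixQuaternionBasis_liftHom_apply, eta_fin_two (0 : Matrix _ _ K)] at hq
  simp only [EmbeddingLike.apply_eq_iff_eq, vecCons_inj, and_true, Matrix.zero_apply] at hq
  have hJ : q.imJ = 0 := mul_left_cancel₀ h3 (by grind)
  have hK : q.imK = 0 := mul_left_cancel₀ h3 (by grind)
  rw [hJ, hK] at hq
  have hre : q.re = 0 := by linear_combination hq.1.1
  have hI : q.imI = 0 := by linear_combination hq.2.1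
  exact QuaternionAlgebra.ext hre hI hJ hK

theorem exists_ringEquiv_matrix_det_eq_reducedNorm [Finite K] (h3 : (3 : K) ≠ 0) :
    ∃ e : ℍ[K,-1,-1,-1] ≃+* Matrix (Fin 2) (Fin 2) K, ∀ q, (e q).det = reducedNorm q := by
  obtain ⟨a, b, hab⟩ := exists_sq_add_mul_add_sq_eq_neg_one h3
  have hinj := matrixQuaternionBasis_liftHom_injective h3 hab
  have hsurj := (LinearMap.injective_iff_surjective_of_finrank_eq_finrank
    (f := (matrixQuaternionBasis hab).liftHom.toLinearMap)
    (by simp [QuaternionAlgebra.finrank_eq_four, Module.finrank_matrix])).1 hinj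
  refine ⟨(AlgEquiv.ofBijective _ ⟨hinj, hsurj⟩ : _ ≃ₐ[K] _).toRingEquiv, fun q => ?_⟩
  change ((matrixQuaternionBasis hab).liftHom q).det = _
  rw [matrixQuaternionBasis_liftHom_apply, det_fin_two_of, reducedNorm_apply]
  grind

end Splitting

namespace EisensteinQuaternion

/-- Coordinatewise reduction of the order to the quaternion algebra over `R`. -/
def castHom (R : Type*) [CommRing R] : EisensteinQuaternion →+* ℍ[R,-1,-1,-1] where
  toFun g := ⟨g.re, g.imI, g.imJ, g.imK⟩
  map_zero' := by ext <;> simp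
  map_one' := by ext <;> simp
  map_add' g h := by ext <;> simp
  map_mul' g h := by ext <;> simp

theorem reducedNorm_castHom (R : Type*) [CommRing R] (g : EisensteinQuaternion) :
    reducedNorm (castHom R g) = ((reducedNorm g : ℤ) : R) := by
  simp [castHom, reducedNorm_apply]

theorem castHom_zmod_surjective (p : ℕ) : Function.Surjective (castHom (ZMod p)) := by
  rintro ⟨x, y, z, w⟩
  obtain ⟨⟨x, rfl⟩, ⟨y, rfl⟩, ⟨z, rfl⟩, ⟨w, rfl⟩⟩ := And.intro (ZMod.intCast_surjective x) <|
    And.intro (ZMod.intCast_surjective y) <|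
    And.intro (ZMod.intCast_surjective z) (ZMod.intCast_surjective w)
  exact ⟨⟨x, y, z, w⟩, rfl⟩

theorem castHom_zmod_eq_zero_iff (p : ℕ) (g : EisensteinQuaternion) :
    castHom (ZMod p) g = 0 ↔ (p : EisensteinQuaternion) ∣ g := by
  have hcoord : castHom (ZMod p) g = 0 ↔
      (p : ℤ) ∣ g.re ∧ (p : ℤ) ∣ g.imI ∧ (p : ℤ) ∣ g.imJ ∧ (p : ℤ) ∣ g.imK := by
    simp only [QuaternionAlgebra.ext_iff, castHom, RingHom.coe_mk, MonoidHom.coe_mk,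
      OneHom.coe_mk, QuaternionAlgebra.re_zero, QuaternionAlgebra.imI_zero,
      QuaternionAlgebra.imJ_zero, QuaternionAlgebra.imK_zero, ZMod.intCast_zmod_eq_zero_iff_dvd]
  rw [hcoord]
  refine ⟨?_, ?_⟩
  · rintro ⟨⟨x, hx⟩, ⟨y, hy⟩, ⟨z, hz⟩, ⟨w, hw⟩⟩
    exact ⟨⟨x, y, z, w⟩, by ext <;> simp [*]⟩
  · rintro ⟨d, rfl⟩
    simp

/-- `φ` is a reduction modulo `p` of the order: up to isomorphism, the quotient map by `p` onto
`M₂(𝔽_p)`, under which the reduced norm becomes the determinant. -/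
structure IsMatrixReduction (p : ℕ)
    (φ : EisensteinQuaternion →+* Matrix (Fin 2) (Fin 2) (ZMod p)) : Prop where
  det_map (g : EisensteinQuaternion) : (φ g).det = ((reducedNorm g : ℤ) : ZMod p)
  surjective : Function.Surjective φ
  map_eq_zero_iff (g : EisensteinQuaternion) : φ g = 0 ↔ (p : EisensteinQuaternion) ∣ g

/-- The left ideal of elements whose image under `φ` kills the vector `v`. -/
def vectorAnnihilator {p : ℕ} (φ : EisensteinQuaternion →+* Matrix (Fin 2) (Fin 2) (ZMod p))
    (v : Fin 2 → ZMod p) : Ideal EisensteinQuaternion where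
  carrier := {g | φ g *ᵥ v = 0}
  zero_mem' := by simp
  add_mem' {g h} hg hh := by
    rw [Set.mem_ofPred_eq] at hg hh ⊢
    rw [map_add, add_mulVec, hg, hh, add_zero]
  smul_mem' d g hg := by
    rw [Set.mem_ofPred_eq] at hg ⊢
    rw [smul_eq_mul, map_mul, ← mulVec_mulVec, hg, mulVec_zero]

theorem mem_vectorAnnihilator {p : ℕ}
    {φ : EisensteinQuaternion →+* Matrix (Fin 2) (Fin 2) (ZMod p)} {v : Fin 2 → ZMod p}
    {g : EisensteinQuaternion} : g ∈ vectorAnnihilator φ v ↔ φ g *ᵥ v = 0 := Iff.rfl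

theorem exists_isMatrixReduction {p : ℕ} [Fact p.Prime] (hp3 : p ≠ 3) :
    ∃ φ, IsMatrixReduction p φ := by
  have h3 : (3 : ZMod p) ≠ 0 := mod_cast ZMod.prime_ne_zero p 3 hp3
  obtain ⟨e, he⟩ := exists_ringEquiv_matrix_det_eq_reducedNorm h3
  refine ⟨(e : ℍ[ZMod p,-1,-1,-1] →+* _).comp (castHom (ZMod p)), fun g => ?_, ?_, fun g => ?_⟩
  · exact (he _).trans (reducedNorm_castHom _ g)
  · exact e.surjective.comp (castHom_zmod_surjective p)
  · exact e.map_eq_zero_iff.trans (castHom_zmod_eq_zero_iff p g)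

namespace IsMatrixReduction

variable {p : ℕ} {φ : EisensteinQuaternion →+* Matrix (Fin 2) (Fin 2) (ZMod p)}
  {v : Fin 2 → ZMod p}

theorem det_map_eq_zero_iff (hφ : IsMatrixReduction p φ) {g : EisensteinQuaternion} :
    (φ g).det = 0 ↔ (p : ℤ) ∣ reducedNorm g := by
  rw [hφ.det_map, ZMod.intCast_zmod_eq_zero_iff_dvd]

theorem exists_mulVec_eq_zero_and_map_ne_zero (hφ : IsMatrixReduction p φ) (hv : v ≠ 0) :
    ∃ g, φ g *ᵥ v = 0 ∧ φ g ≠ 0 := by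
  obtain ⟨g, hg⟩ := hφ.surjective !![v 1, -v 0; 0, 0]
  refine ⟨g, ?_, fun hzero => hv ?_⟩
  · ext i
    fin_cases i <;> simp [hg, mulVec_eq_sum, mul_comm]
  · have h0 := congr_fun₂ (hg.symm.trans hzero) 0 0
    have h1 := congr_fun₂ (hg.symm.trans hzero) 0 1
    ext i
    fin_cases i
    · simpa using h1
    · simpa using h0

theorem map_ne_zero_of_vectorAnnihilator_eq_span (hφ : IsMatrixReduction p φ) (hv : v ≠ 0)
    {π : EisensteinQuaternion}
    (hπ : vectorAnnihilator φ v = Ideal.span {π}) : φ π ≠ 0 := by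
  obtain ⟨g, hgv, hg0⟩ := hφ.exists_mulVec_eq_zero_and_map_ne_zero hv
  rw [← mem_vectorAnnihilator, hπ, Ideal.mem_span_singleton'] at hgv
  obtain ⟨d, rfl⟩ := hgv
  exact fun hπ0 => hg0 (by rw [map_mul, hπ0, mul_zero])

theorem card_filter_map_eq_zero (hφ : IsMatrixReduction p φ) [NeZero p] (m : ℕ) :
    #{g ∈ normSphere (p * m) | φ g = 0} = if p ∣ m then #(normSphere (m / p)) else 0 := by
  classical
  have hp : (p : ℤ) ≠ 0 := mod_cast NeZero.ne p
  have hpquat : (p : EisensteinQuaternion) ≠ 0 := by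
    rw [Ne, ← reducedNorm_eq_zero, reducedNorm_natCast]
    exact pow_ne_zero 2 hp
  have hnorm (d : EisensteinQuaternion) :
      reducedNorm ((p : EisensteinQuaternion) * d) = (p : ℤ) * (p * reducedNorm d) := by
    rw [map_mul, reducedNorm_natCast, sq, mul_assoc]
  split_ifs with hpm
  · obtain ⟨k, rfl⟩ := hpm
    rw [Nat.mul_div_cancel_left k (NeZero.pos p),
      ← card_image_of_injective (normSphere k) (mul_right_injective₀ hpquat)]
    congr 1
    ext g
    simp only [mem_filter, mem_image, mem_normSphere, hφ.map_eq_zero_iff, Dvd.dvd]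
    rw [← exists_and_left]
    refine exists_congr fun d => ?_
    rw [eq_comm (a := g)]
    refine and_congr_left ?_
    rintro rfl
    rw [hnorm, Nat.cast_mul, Nat.cast_mul, mul_right_inj' hp, mul_right_inj' hp]
  · refine card_eq_zero.2 (filter_eq_empty_iff.2 ?_)
    intro g hg hzero
    obtain ⟨d, rfl⟩ := (hφ.map_eq_zero_iff g).1 hzero
    rw [mem_normSphere, hnorm, Nat.cast_mul, mul_right_inj' hp] at hg
    exact hpm (Int.natCast_dvd_natCast.1 ⟨_, hg.symm⟩)

variable [Fact p.Prime]

theorem natCast_dvd_reducedNorm_of_mulVec_eq_zero (hφ : IsMatrixReduction p φ) (hv : v ≠ 0)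
    {g : EisensteinQuaternion}
    (hg : φ g *ᵥ v = 0) : (p : ℤ) ∣ reducedNorm g :=
  hφ.det_map_eq_zero_iff.1 (exists_mulVec_eq_zero_iff.1 ⟨v, hv, hg⟩)

theorem exists_reducedNorm_eq_and_vectorAnnihilator_eq_span (hφ : IsMatrixReduction p φ)
    (hv : v ≠ 0) :
    ∃ π, reducedNorm π = (p : ℤ) ∧ vectorAnnihilator φ v = Ideal.span {π} := by
  obtain ⟨π, hπ⟩ := (IsPrincipalIdealRing.principal (vectorAnnihilator φ v)).principal
  refine ⟨π, ?_, hπ⟩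
  obtain ⟨d, hd⟩ : ∃ d, d * π = p := by
    rw [← Ideal.mem_span_singleton', ← Ideal.submodule_span_eq, ← hπ, mem_vectorAnnihilator,
      (hφ.map_eq_zero_iff p).2 dvd_rfl, zero_mulVec]
  obtain ⟨k, hk⟩ : (p : ℤ) ∣ reducedNorm π :=
    hφ.natCast_dvd_reducedNorm_of_mulVec_eq_zero hv <| mem_vectorAnnihilator.1 <|
      hπ ▸ Submodule.mem_span_singleton_self π
  have hp : Prime (p : ℤ) := Nat.prime_iff_prime_int.1 Fact.out
  have hfactor : (p : ℤ) = reducedNorm d * k := by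
    have hnorm := congrArg reducedNorm hd
    rw [map_mul, reducedNorm_natCast, hk] at hnorm
    exact mul_left_cancel₀ hp.ne_zero (by linear_combination -hnorm)
  rcases hp.irreducible.isUnit_or_isUnit hfactor with hunit | hunit
  · have hd1 : reducedNorm d = 1 := (Int.isUnit_iff.1 hunit).resolve_right fun hneg => by
      linarith [reducedNorm_nonneg d]
    have hdvd : (p : EisensteinQuaternion) ∣ π := ⟨star d, by
      rw [(Nat.cast_commute p (star d)).eq, ← hd, ← mul_assoc, star_mul_eq_reducedNorm_smul_one,
        hd1, one_smul, one_mul]⟩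
    exact absurd ((hφ.map_eq_zero_iff π).2 hdvd) (hφ.map_ne_zero_of_vectorAnnihilator_eq_span hv hπ)
  · have hk1 : k = 1 := (Int.isUnit_iff.1 hunit).resolve_right fun hneg => by
      have hpos : 0 < (p : ℤ) := mod_cast (Fact.out : p.Prime).pos
      linarith [hneg ▸ hk ▸ reducedNorm_nonneg π]
    rw [hk, hk1, mul_one]

theorem card_filter_mulVec_eq_zero (hφ : IsMatrixReduction p φ) (hv : v ≠ 0) (m : ℕ) :
    #{g ∈ normSphere (p * m) | φ g *ᵥ v = 0} = #(normSphere m) := by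
  classical
  have hp : p.Prime := Fact.out
  obtain ⟨π, hπnorm, hπspan⟩ := hφ.exists_reducedNorm_eq_and_vectorAnnihilator_eq_span hv
  have hπ0 : π ≠ 0 := fun h => hp.ne_zero (by simpa [h] using hπnorm.symm)
  rw [← card_image_of_injective (normSphere m) (mul_left_injective₀ hπ0)]
  congr 1
  ext g
  rw [mem_filter, mem_image, mem_normSphere, ← mem_vectorAnnihilator, hπspan,
    Ideal.mem_span_singleton', ← exists_and_left]
  refine exists_congr fun d => ?_
  rw [mem_normSphere]
  refine and_congr_left ?_
  rintro rfl
  rw [map_mul, hπnorm, Nat.cast_mul, mul_comm, mul_right_inj' (mod_cast hp.ne_zero)]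

theorem card_filter_rep_mulVec_eq_zero (hφ : IsMatrixReduction p φ)
    [Fintype (ℙ (ZMod p) (Fin 2 → ZMod p))]
    {g : EisensteinQuaternion} (hg : (p : ℤ) ∣ reducedNorm g) :
    #{ℓ : ℙ (ZMod p) (Fin 2 → ZMod p) | φ g *ᵥ ℓ.rep = 0} = 1 + if φ g = 0 then p else 0 := by
  split_ifs with hzero
  · simp only [hzero, zero_mulVec, filter_true, card_univ, ← Nat.card_eq_fintype_card]
    rw [Projectivization.card_of_finrank_two _ _ (by simp), Nat.card_zmod, add_comm]
  · rw [card_eq_one_iff_existsUnique]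
    simpa using existsUnique_mulVec_rep_eq_zero (hφ.det_map_eq_zero_iff.2 hg) hzero

end IsMatrixReduction

theorem card_normSphere_prime_mul {p : ℕ} [Fact p.Prime] (hp3 : p ≠ 3) (m : ℕ) :
    #(normSphere (p * m)) + p * (if p ∣ m then #(normSphere (m / p)) else 0) =
      (p + 1) * #(normSphere m) := by
  have := Fintype.ofFinite (ℙ (ZMod p) (Fin 2 → ZMod p))
  obtain ⟨φ, hφ⟩ := exists_isMatrixReduction hp3
  have hcardLine : #(univ : Finset (ℙ (ZMod p) (Fin 2 → ZMod p))) = p + 1 := by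
    rw [card_univ, ← Nat.card_eq_fintype_card, Projectivization.card_of_finrank_two _ _ (by simp),
      Nat.card_zmod]
  have hdvd {g} (hg : g ∈ normSphere (p * m)) : (p : ℤ) ∣ reducedNorm g := by
    rw [mem_normSphere.1 hg, Nat.cast_mul]
    exact dvd_mul_right _ _
  calc #(normSphere (p * m)) + p * (if p ∣ m then #(normSphere (m / p)) else 0)
      = ∑ g ∈ normSphere (p * m), (1 + if φ g = 0 then p else 0) := by
        rw [← hφ.card_filter_map_eq_zero, sum_add_distrib, ← sum_filter, sum_const, sum_const,
          smul_eq_mul, smul_eq_mul, mul_one, Nat.mul_comm p #_]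
    _ = ∑ g ∈ normSphere (p * m), #{ℓ : ℙ (ZMod p) (Fin 2 → ZMod p) | φ g *ᵥ ℓ.rep = 0} :=
        sum_congr rfl fun g hg => (hφ.card_filter_rep_mulVec_eq_zero (hdvd hg)).symm
    _ = ∑ ℓ : ℙ (ZMod p) (Fin 2 → ZMod p), #{g ∈ normSphere (p * m) | φ g *ᵥ ℓ.rep = 0} :=
        sum_card_bipartiteAbove_eq_sum_card_bipartiteBelow _
    _ = (p + 1) * #(normSphere m) := by
        simp_rw [hφ.card_filter_mulVec_eq_zero (Projectivization.rep_nonzero _)]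
        rw [sum_const, hcardLine, smul_eq_mul]

end EisensteinQuaternion

theorem sigma_prime_mul (j : ℕ) {p m : ℕ} (hp : p.Prime) (hm : m ≠ 0) :
    σ j (p * m) + p ^ j * (if p ∣ m then σ j (m / p) else 0) = (p ^ j + 1) * σ j m := by
  obtain ⟨k, r, hpr, rfl⟩ := Nat.exists_eq_pow_mul_and_not_dvd hm p hp.ne_one
  have hsplit (i : ℕ) : σ j (p ^ i * r) = (∑ l ∈ range (i + 1), p ^ (l * j)) * σ j r := by
    rw [ArithmeticFunction.isMultiplicative_sigma.map_mul_of_coprime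
      (((Nat.Prime.coprime_iff_not_dvd hp).2 hpr).pow_left i),
      ArithmeticFunction.sigma_apply_prime_pow hp]
  rw [← mul_assoc, ← pow_succ', hsplit, hsplit]
  cases k with
  | zero => simp [hpr, sum_range_succ, add_comm]
  | succ k =>
    rw [if_pos (dvd_mul_of_dvd_left (dvd_pow_self p k.succ_ne_zero) r), pow_succ', mul_assoc,
      Nat.mul_div_cancel_left _ hp.pos, hsplit, sum_range_succ _ (k + 1 + 1),
      sum_range_succ _ (k + 1)]
    ring

namespace EisensteinQuaternion

theorem card_normSphere {m : ℕ} (hm : m ≠ 0) (hm3 : ¬ 3 ∣ m) :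
    #(normSphere m) = 12 * σ 1 m := by
  induction m using Nat.strong_induction_on with
  | _ m ih =>
  rcases eq_or_ne m 1 with rfl | hm1
  · rw [card_normSphere_one, ArithmeticFunction.sigma_one, mul_one]
  have hp : m.minFac.Prime := Nat.minFac_prime hm1
  have : Fact m.minFac.Prime := ⟨hp⟩
  obtain ⟨k, hk⟩ := m.minFac_dvd
  generalize m.minFac = p at *
  subst hk
  have hk0 : k ≠ 0 := right_ne_zero_of_mul hm
  have hk3 : ¬ 3 ∣ k := fun h => hm3 (h.mul_left p)
  have hp3 : p ≠ 3 := fun h => hm3 (h ▸ dvd_mul_right p k)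
  have hkp : k < p * k := lt_mul_of_one_lt_left (Nat.pos_of_ne_zero hk0) hp.one_lt
  have hk : #(normSphere k) = 12 * σ 1 k := ih k hkp hk0 hk3
  have hkdiv : (if p ∣ k then #(normSphere (k / p)) else 0) =
      12 * if p ∣ k then σ 1 (k / p) else 0 := by
    split_ifs with hpk
    · exact ih _ ((Nat.div_le_self k p).trans_lt hkp)
        ((Nat.div_ne_zero_iff_of_dvd hpk).2 ⟨hk0, hp.ne_zero⟩)
        fun h => hk3 (h.trans (Nat.div_dvd_of_dvd hpk))
    · rfl
  have hcard := card_normSphere_prime_mul hp3 k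
  have hsigma := sigma_prime_mul 1 hp hk0
  rw [hk, hkdiv] at hcard
  rw [pow_one] at hsigma
  linear_combination hcard - 12 * hsigma

end EisensteinQuaternion

section BetaSet

variable {μ ν : YoungDiagram}

theorem lt_rowLen_iff_lt_colLen {i j : ℕ} : j < μ.rowLen i ↔ i < μ.colLen j := by
  rw [← YoungDiagram.mem_iff_lt_rowLen, ← YoungDiagram.mem_iff_lt_colLen]

/-- The beta-set of a Young diagram: the hook lengths of its first column. It determines the
diagram, and the hook lengths of all cells are read off from its gaps. -/
def betaSet (μ : YoungDiagram) : Finset ℕ :=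
  (range (μ.colLen 0)).image fun i => μ.rowLen i + (μ.colLen 0 - 1 - i)

theorem mem_betaSet {x : ℕ} :
    x ∈ betaSet μ ↔ ∃ i < μ.colLen 0, μ.rowLen i + (μ.colLen 0 - 1 - i) = x := by
  simp [betaSet]

theorem injOn_firstColumnHook (μ : YoungDiagram) :
    Set.InjOn (fun i => μ.rowLen i + (μ.colLen 0 - 1 - i)) (range (μ.colLen 0)) := by
  intro i hi j hj heq
  simp only [coe_range, Set.mem_Iio] at hi hj heq
  rcases le_total i j with h | h <;> have := μ.rowLen_anti _ _ h <;> lia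

theorem card_betaSet (μ : YoungDiagram) : #(betaSet μ) = μ.colLen 0 := by
  rw [betaSet, card_image_of_injOn (injOn_firstColumnHook μ), card_range]

theorem notMem_betaSet_iff {y : ℕ} : y ∉ betaSet μ ↔ ∃ j, y + μ.colLen j = j + μ.colLen 0 := by
  constructor
  · intro hy
    have hrow (i : ℕ) (hi : i < μ.colLen 0) : μ.rowLen i + (μ.colLen 0 - 1 - i) ≠ y :=
      fun heq => hy (mem_betaSet.2 ⟨i, hi, heq⟩)
    -- `i` counts the elements of the beta-set above `y`.
    obtain ⟨i, hi, hmin⟩ : ∃ i, (μ.colLen 0 ≤ i ∨ μ.rowLen i + (μ.colLen 0 - 1 - i) ≤ y) ∧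
        ∀ k < i, k < μ.colLen 0 ∧ y < μ.rowLen k + (μ.colLen 0 - 1 - k) := by
      have hex : ∃ i, μ.colLen 0 ≤ i ∨ μ.rowLen i + (μ.colLen 0 - 1 - i) ≤ y := ⟨_, .inl le_rfl⟩
      classical
      exact ⟨Nat.find hex, Nat.find_spec hex, fun k hk => by simpa using Nat.find_min hex hk⟩
    have hi_le : i ≤ μ.colLen 0 := by
      by_contra! hlt
      exact (hmin _ hlt).1.false
    have hle : μ.colLen 0 ≤ y + i := by grind
    refine ⟨y + i - μ.colLen 0, ?_⟩
    have hcol_le : μ.colLen (y + i - μ.colLen 0) ≤ i := by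
      rw [← not_lt, ← lt_rowLen_iff_lt_colLen]
      have := @lt_rowLen_iff_lt_colLen μ i 0
      grind
    have hle_col : i ≤ μ.colLen (y + i - μ.colLen 0) := by
      rcases i with - | k
      · exact Nat.zero_le _
      · have := hmin k k.lt_succ_self
        rw [Nat.succ_le_iff, ← lt_rowLen_iff_lt_colLen]
        lia
    lia
  · rintro ⟨j, hj⟩ hy
    obtain ⟨i, hi, heq⟩ := mem_betaSet.1 hy
    have := @lt_rowLen_iff_lt_colLen μ i j
    lia

theorem zero_notMem_betaSet (μ : YoungDiagram) : 0 ∉ betaSet μ :=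
  notMem_betaSet_iff.2 ⟨0, rfl⟩

theorem exists_hookLength_eq_iff {h : ℕ} :
    (∃ c ∈ μ.cells, μ.hookLength c.1 c.2 = h) ↔ 0 < h ∧ ∃ x ∉ betaSet μ, x + h ∈ betaSet μ := by
  constructor
  · rintro ⟨⟨i, j⟩, hc, rfl⟩
    rw [YoungDiagram.mem_cells, YoungDiagram.mem_iff_lt_rowLen] at hc
    have hcol := lt_rowLen_iff_lt_colLen.1 hc
    have hanti := μ.colLen_anti 0 j j.zero_le
    refine ⟨by unfold YoungDiagram.hookLength; lia, j + μ.colLen 0 - μ.colLen j,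
      notMem_betaSet_iff.2 ⟨j, by lia⟩, mem_betaSet.2 ⟨i, by lia, ?_⟩⟩
    unfold YoungDiagram.hookLength
    lia
  · rintro ⟨hpos, x, hx, hxh⟩
    obtain ⟨j, hj⟩ := notMem_betaSet_iff.1 hx
    obtain ⟨i, hi, heq⟩ := mem_betaSet.1 hxh
    have := @lt_rowLen_iff_lt_colLen μ i j
    refine ⟨(i, j), (YoungDiagram.mem_cells _).2 (YoungDiagram.mem_iff_lt_rowLen.2 (by lia)), ?_⟩
    unfold YoungDiagram.hookLength
    lia

theorem isThreeCore_iff_betaSet :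
    μ.IsThreeCore ↔ ∀ x k, x + 3 * k ∈ betaSet μ → x ∈ betaSet μ := by
  constructor
  · intro hcore x k hxk
    by_contra hx
    have hk : 0 < 3 * k := Nat.pos_of_ne_zero fun hk => hx (by simpa [hk] using hxk)
    obtain ⟨c, hc, hook⟩ := exists_hookLength_eq_iff.2 ⟨hk, x, hx, hxk⟩
    exact hcore c hc ⟨k, hook⟩
  · rintro hclosed c hc ⟨k, hook⟩
    obtain ⟨-, x, hx, hxk⟩ := exists_hookLength_eq_iff.1 ⟨c, hc, hook⟩
    exact hx (hclosed x k hxk)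

theorem orderEmbOfFin_betaSet {k : ℕ} (hk : #(betaSet μ) = k) (m : Fin k) :
    (betaSet μ).orderEmbOfFin hk m = μ.rowLen (k - 1 - m) + m := by
  have hcol : μ.colLen 0 = k := (card_betaSet μ).symm.trans hk
  refine (congrFun (orderEmbOfFin_unique hk (f := fun m : Fin k => μ.rowLen (k - 1 - m) + m)
    (fun m => mem_betaSet.2 ⟨k - 1 - m, by lia, by lia⟩) fun m m' hlt => ?_) m).symm
  have := μ.rowLen_anti (k - 1 - m') (k - 1 - m) (by lia)
  simp only
  lia

theorem betaSet_injective : Function.Injective betaSet := by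
  intro μ ν heq
  have hcol : μ.colLen 0 = ν.colLen 0 := by rw [← card_betaSet, ← card_betaSet, heq]
  have hrow (i : ℕ) : μ.rowLen i = ν.rowLen i := by
    rcases lt_or_ge i (μ.colLen 0) with hi | hi
    · let m : Fin (μ.colLen 0) := ⟨μ.colLen 0 - 1 - i, by lia⟩
      have hμ := orderEmbOfFin_betaSet (card_betaSet μ) m
      have hν := orderEmbOfFin_betaSet (heq ▸ card_betaSet μ) m
      simp only [heq] at hμ
      have hm : μ.colLen 0 - 1 - m = i := by simp only [m]; lia
      rw [hm] at hμ hν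
      lia
    · have hμ := @lt_rowLen_iff_lt_colLen μ i 0
      have hν := @lt_rowLen_iff_lt_colLen ν i 0
      lia
  ext ⟨i, j⟩
  rw [YoungDiagram.mem_cells, YoungDiagram.mem_cells, YoungDiagram.mem_iff_lt_rowLen,
    YoungDiagram.mem_iff_lt_rowLen, hrow]

theorem exists_youngDiagram_rowLen_eq {k : ℕ} {r : Fin k → ℕ} (hr : Antitone r)
    (hpos : ∀ i, 0 < r i) :
    ∃ μ : YoungDiagram, μ.colLen 0 = k ∧ ∀ i : Fin k, μ.rowLen i = r i := by
  refine ⟨YoungDiagram.ofRowLens (List.ofFn r) hr.sortedGE_ofFn, ?_, fun i => ?_⟩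
  · rw [← YoungDiagram.length_rowLens,
      YoungDiagram.rowLens_ofRowLens_eq_self (by simpa using hpos), List.length_ofFn]
  · simpa using YoungDiagram.rowLen_ofRowLens (hw := hr.sortedGE_ofFn)
      (i.cast List.length_ofFn.symm)

theorem apply_add_sub_le_apply_of_strictMono {k : ℕ} {f : Fin k → ℕ} (hf : StrictMono f)
    {i j : Fin k} (hij : i ≤ j) : f i + (j - i) ≤ f j := by
  have hcard := card_le_card_of_injOn (s := Ioc i j) (t := Ioc (f i) (f j)) f
    (fun m hm => by simpa [hf.lt_iff_lt, hf.le_iff_le] using hm) hf.injective.injOn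
  rw [Fin.card_Ioc, Nat.card_Ioc] at hcard
  have := hf.monotone hij
  lia

theorem exists_betaSet_eq {X : Finset ℕ} (hX : 0 ∉ X) : ∃ μ, betaSet μ = X := by
  set k := #X with hk
  let e := X.orderEmbOfFin hk.symm
  have hgap {i j : Fin k} (hij : i ≤ j) : e i + (j - i) ≤ e j :=
    apply_add_sub_le_apply_of_strictMono e.strictMono hij
  have hlt (i : Fin k) : i < e i := by
    have hzero : e ⟨0, i.pos⟩ ≠ 0 := fun h => hX (h ▸ orderEmbOfFin_mem X hk.symm _)
    have := hgap (i := ⟨0, i.pos⟩) (j := i) (Nat.zero_le _)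
    lia
  have hanti : Antitone fun i : Fin k => e i.rev - i.rev := fun i j hij => by
    have := hgap (Fin.rev_le_rev.2 hij)
    lia
  obtain ⟨μ, hcol, hrow⟩ := exists_youngDiagram_rowLen_eq hanti fun i => Nat.sub_pos_of_lt (hlt _)
  refine ⟨μ, eq_of_subset_of_card_le (fun x hx => ?_) (by rw [card_betaSet, hcol])⟩
  obtain ⟨i, hi, rfl⟩ := mem_betaSet.1 hx
  rw [hcol] at hi
  have hval : μ.rowLen i + (μ.colLen 0 - 1 - i) = e (Fin.rev ⟨i, hi⟩) := by
    have := hrow ⟨i, hi⟩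
    have := hlt (Fin.rev ⟨i, hi⟩)
    grind
  exact hval ▸ orderEmbOfFin_mem X hk.symm _

/-- Beta-sets identify Young diagrams with the finite sets of positive integers. -/
noncomputable def betaSetEquiv : YoungDiagram ≃ {X : Finset ℕ // 0 ∉ X} :=
  Equiv.ofBijective (fun μ => ⟨betaSet μ, zero_notMem_betaSet μ⟩)
    ⟨fun _ _ h => betaSet_injective (congrArg Subtype.val h),
      fun X => (exists_betaSet_eq X.2).imp fun _ => Subtype.ext⟩

theorem betaSet_betaSetEquiv_symm (X : {X : Finset ℕ // 0 ∉ X}) :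
    betaSet (betaSetEquiv.symm X) = X :=
  congrArg Subtype.val (betaSetEquiv.apply_symm_apply X)

theorem card_eq_sum_rowLen (μ : YoungDiagram) :
    μ.card = ∑ i ∈ range (μ.colLen 0), μ.rowLen i := by
  rw [YoungDiagram.card, card_eq_sum_card_fiberwise (f := Prod.fst) (t := range (μ.colLen 0))]
  · exact sum_congr rfl fun i _ => (μ.rowLen_eq_card).symm
  · rintro ⟨i, j⟩ hc
    have hj : j < μ.rowLen i := YoungDiagram.mem_iff_lt_rowLen.1 hc
    simp only [coe_range, Set.mem_Iio, ← lt_rowLen_iff_lt_colLen]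
    lia

theorem card_add_sum_range_card_betaSet (μ : YoungDiagram) :
    μ.card + ∑ i ∈ range #(betaSet μ), i = ∑ x ∈ betaSet μ, x := by
  rw [card_betaSet, betaSet, sum_image (injOn_firstColumnHook μ), sum_add_distrib,
    sum_range_reflect (fun i => i), card_eq_sum_rowLen]

end BetaSet

section ThreeCore

/-- The beta-set of a 3-core: the first `a` positive integers congruent to `1` modulo `3` and the
first `b` congruent to `2`. -/
def threeCoreBetaSet (a b : ℕ) : Finset ℕ :=
  (range a).image (3 * · + 1) ∪ (range b).image (3 * · + 2)

theorem mem_threeCoreBetaSet {a b x : ℕ} :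
    x ∈ threeCoreBetaSet a b ↔ x % 3 = 1 ∧ x / 3 < a ∨ x % 3 = 2 ∧ x / 3 < b := by
  simp only [threeCoreBetaSet, mem_union, mem_image, mem_range]
  refine or_congr ⟨?_, fun h => ⟨x / 3, by lia⟩⟩ ⟨?_, fun h => ⟨x / 3, by lia⟩⟩ <;>
  rintro ⟨q, hq, rfl⟩ <;> lia

theorem zero_notMem_threeCoreBetaSet (a b : ℕ) : 0 ∉ threeCoreBetaSet a b := by
  simp [mem_threeCoreBetaSet]

theorem threeCoreBetaSet_inj {a b a' b' : ℕ} :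
    threeCoreBetaSet a b = threeCoreBetaSet a' b' ↔ a = a' ∧ b = b' := by
  refine ⟨fun heq => ?_, fun ⟨ha, hb⟩ => ha ▸ hb ▸ rfl⟩
  have hmem (x : ℕ) := heq ▸ @mem_threeCoreBetaSet a b x
  simp only [mem_threeCoreBetaSet] at hmem
  constructor
  · refine eq_of_forall_lt_iff fun q => ?_
    have := hmem (3 * q + 1)
    lia
  · refine eq_of_forall_lt_iff fun q => ?_
    have := hmem (3 * q + 2)
    lia

theorem sum_threeCoreBetaSet {M : Type*} [AddCommMonoid M] (f : ℕ → M) (a b : ℕ) :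
    ∑ x ∈ threeCoreBetaSet a b, f x =
      ∑ q ∈ range a, f (3 * q + 1) + ∑ q ∈ range b, f (3 * q + 2) := by
  have hdisj : Disjoint ((range a).image (3 * · + 1)) ((range b).image (3 * · + 2)) := by
    simp only [disjoint_left, mem_image]
    lia
  rw [threeCoreBetaSet, sum_union hdisj, sum_image (by simp), sum_image (by simp)]

theorem card_threeCoreBetaSet (a b : ℕ) : #(threeCoreBetaSet a b) = a + b := by
  rw [card_eq_sum_ones, sum_threeCoreBetaSet]
  simp

theorem two_mul_sum_range_id_add (n : ℕ) : 2 * ∑ i ∈ range n, i + n = n ^ 2 := by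
  rw [mul_comm, sum_range_id_mul_two, ← Nat.mul_succ]
  cases n <;> simp [sq]

theorem two_mul_sum_threeCoreBetaSet_add (a b : ℕ) :
    2 * ∑ x ∈ threeCoreBetaSet a b, x + a = 3 * a ^ 2 + 3 * b ^ 2 + b := by
  rw [sum_threeCoreBetaSet, sum_add_distrib, sum_add_distrib, ← mul_sum, ← mul_sum]
  simp only [sum_const, card_range, smul_eq_mul]
  have := two_mul_sum_range_id_add a
  have := two_mul_sum_range_id_add b
  lia

theorem exists_forall_mem_iff_lt {S : Set ℕ} (hS : IsLowerSet S) (hfin : S.Finite) :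
    ∃ a, ∀ q, q ∈ S ↔ q < a := by
  rcases hS.eq_univ_or_Iio with rfl | ⟨a, rfl⟩
  · exact (Set.infinite_univ hfin).elim
  · exact ⟨a, fun _ => Iff.rfl⟩

theorem isThreeCore_iff_exists_betaSet_eq {μ : YoungDiagram} :
    μ.IsThreeCore ↔ ∃ a b, betaSet μ = threeCoreBetaSet a b := by
  rw [isThreeCore_iff_betaSet]
  constructor
  · intro hclosed
    have hthreshold (c : ℕ) : ∃ a, ∀ q, 3 * q + c ∈ betaSet μ ↔ q < a := by
      refine exists_forall_mem_iff_lt (S := (3 * · + c) ⁻¹' betaSet μ) (fun q r hrq hq => ?_)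
        ((betaSet μ).finite_toSet.preimage fun q _ r _ h => by simpa using h)
      refine hclosed _ (q - r) ?_
      rwa [show 3 * r + c + 3 * (q - r) = 3 * q + c by lia]
    obtain ⟨a, ha⟩ := hthreshold 1
    obtain ⟨b, hb⟩ := hthreshold 2
    refine ⟨a, b, ?_⟩
    ext x
    have hdiv := Nat.div_add_mod x 3
    rw [mem_threeCoreBetaSet, ← ha, ← hb]
    have hres : x % 3 = 0 ∨ x % 3 = 1 ∨ x % 3 = 2 := by lia
    rcases hres with h | h | h <;> rw [h] at hdiv
    · have hx : x ∉ betaSet μ := fun hx =>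
        zero_notMem_betaSet μ (hclosed 0 (x / 3) (by rwa [zero_add, ← add_zero (3 * _), hdiv]))
      simp [hx, h]
    · simp [hdiv, h]
    · simp [hdiv, h]
  · rintro ⟨a, b, heq⟩ x k
    rw [heq, mem_threeCoreBetaSet, mem_threeCoreBetaSet]
    lia

/-- The 3-core with beta-set `threeCoreBetaSet a b`. -/
noncomputable def threeCore (a b : ℕ) : YoungDiagram :=
  betaSetEquiv.symm ⟨_, zero_notMem_threeCoreBetaSet a b⟩

theorem betaSet_threeCore (a b : ℕ) : betaSet (threeCore a b) = threeCoreBetaSet a b :=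
  betaSet_betaSetEquiv_symm _

theorem isThreeCore_threeCore (a b : ℕ) : (threeCore a b).IsThreeCore :=
  isThreeCore_iff_exists_betaSet_eq.2 ⟨a, b, betaSet_threeCore a b⟩

theorem card_threeCore_add_mul (a b : ℕ) :
    (threeCore a b).card + a * b = a ^ 2 + b ^ 2 + b := by
  have hsize := card_add_sum_range_card_betaSet (threeCore a b)
  rw [betaSet_threeCore, card_threeCoreBetaSet] at hsize
  have := two_mul_sum_threeCoreBetaSet_add a b
  have := two_mul_sum_range_id_add (a + b)
  lia

theorem threeCore_inj {a b a' b' : ℕ} :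
    threeCore a b = threeCore a' b' ↔ a = a' ∧ b = b' := by
  rw [← threeCoreBetaSet_inj, ← betaSet_threeCore, ← betaSet_threeCore, betaSet_injective.eq_iff]

theorem exists_threeCore_eq {μ : YoungDiagram} (hμ : μ.IsThreeCore) :
    ∃ a b, threeCore a b = μ := by
  obtain ⟨a, b, heq⟩ := isThreeCore_iff_exists_betaSet_eq.1 hμ
  exact ⟨a, b, betaSet_injective ((betaSet_threeCore a b).trans heq.symm)⟩

end ThreeCore

namespace EisensteinInt

/-- The primitive sixth root of unity `1 + ω`. -/
def zeta : EisensteinInt := ⟨1, 1⟩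

theorem zeta_mul (x y : ℤ) : zeta * ⟨x, y⟩ = ⟨x - y, x⟩ := by
  ext <;> simp [zeta]; ring

theorem norm_zeta : zeta.norm = 1 := by
  decide

/-- The Eisenstein integers in a closed sector of angle `2π/3` that are congruent to `-1` modulo
`√-3`, in the coordinates of the beta-set of a 3-core. -/
def sectorPoint (a b : ℕ) : EisensteinInt := ⟨a - 2 * b - 1, 2 * a - b⟩

theorem norm_zeta_pow_mul_sectorPoint (k a b : ℕ) :
    (zeta ^ k * sectorPoint a b).norm = 3 * (threeCore a b).card + 1 := by
  have hcard : ((threeCore a b).card : ℤ) + a * b = a ^ 2 + b ^ 2 + b :=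
    mod_cast card_threeCore_add_mul a b
  rw [map_mul, map_pow, norm_zeta, one_pow, one_mul, norm_eq]
  simp only [sectorPoint]
  linear_combination -3 * hcard

theorem exists_sectorPoint_eq {x y : ℤ} (hmod : (x + y) % 3 = 2) (hx : x ≤ 2 * y)
    (hy : 2 * x ≤ y) : ∃ a b, sectorPoint a b = ⟨x, y⟩ := by
  refine ⟨((2 * y - x - 1) / 3).toNat, ((y - 2 * x - 2) / 3).toNat, ?_⟩
  ext <;> simp only [sectorPoint] <;> lia

theorem zeta_pow_three : zeta ^ 3 = -1 := by
  decide

theorem zeta_pow_six : zeta ^ 6 = 1 := by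
  decide

-- Multiplication by `ζ ^ 2` permutes the three sectors of angle `2π/3`.
theorem exists_zeta_pow_mul_sectorPoint_eq_of_emod_eq_two {z : EisensteinInt}
    (hz : (z.re + z.im) % 3 = 2) : ∃ k a b : ℕ, zeta ^ k * sectorPoint a b = z := by
  obtain ⟨x, y⟩ := z
  simp only at hz
  have hsector : x ≤ 2 * y ∧ 2 * x ≤ y ∨ y ≤ 2 * x ∧ 0 ≤ x + y ∨ x + y ≤ 0 ∧ 2 * y ≤ x := by lia
  rcases hsector with ⟨h₁, h₂⟩ | ⟨h₁, h₂⟩ | ⟨h₁, h₂⟩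
  · obtain ⟨a, b, hab⟩ := exists_sectorPoint_eq hz h₁ h₂
    exact ⟨0, a, b, by rw [pow_zero, one_mul, hab]⟩
  · obtain ⟨a, b, hab⟩ := exists_sectorPoint_eq (x := -y) (y := x - y) (by lia) (by lia) (by lia)
    exact ⟨4, a, b, by simp [hab, pow_succ', mul_assoc, zeta_mul]⟩
  · obtain ⟨a, b, hab⟩ := exists_sectorPoint_eq (x := y - x) (y := -x) (by lia) (by lia) (by lia)
    exact ⟨2, a, b, by simp [hab, pow_succ', mul_assoc, zeta_mul]⟩

theorem exists_zeta_pow_mul_sectorPoint_eq {z : EisensteinInt} (hz : ¬ 3 ∣ z.re + z.im) :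
    ∃ (k : Fin 6) (a b : ℕ), zeta ^ (k : ℕ) * sectorPoint a b = z := by
  suffices h : ∃ k a b : ℕ, zeta ^ k * sectorPoint a b = z by
    obtain ⟨k, a, b, rfl⟩ := h
    exact ⟨⟨k % 6, k.mod_lt (by norm_num)⟩, a, b, by rw [pow_eq_pow_mod k zeta_pow_six]⟩
  have hres : (z.re + z.im) % 3 = 2 ∨ ((-z).re + (-z).im) % 3 = 2 := by
    simp only [QuadraticAlgebra.re_neg, QuadraticAlgebra.im_neg]
    lia
  rcases hres with h | h
  · exact exists_zeta_pow_mul_sectorPoint_eq_of_emod_eq_two h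
  · obtain ⟨k, a, b, hk⟩ := exists_zeta_pow_mul_sectorPoint_eq_of_emod_eq_two h
    exact ⟨3 + k, a, b, by rw [pow_add, mul_assoc, hk, zeta_pow_three, neg_one_mul, neg_neg]⟩

theorem zeta_pow_mul_sectorPoint_inj {k l : Fin 6} {a b c d : ℕ}
    (heq : zeta ^ (k : ℕ) * sectorPoint a b = zeta ^ (l : ℕ) * sectorPoint c d) :
    k = l ∧ a = c ∧ b = d := by
  fin_cases k <;> fin_cases l <;>
  simp [sectorPoint, pow_succ', mul_assoc, zeta_mul, QuadraticAlgebra.ext_iff] at heq ⊢ <;> lia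

theorem norm_emod_three (z : EisensteinInt) :
    z.norm % 3 = if 3 ∣ z.re + z.im then 0 else 1 := by
  have hnorm : z.norm = (z.re + z.im) ^ 2 - 3 * (z.re * z.im) := by
    rw [norm_eq]
    ring
  rw [hnorm, Int.sub_mul_emod_self_left]
  have hres : (z.re + z.im) % 3 = 0 ∨ (z.re + z.im) % 3 = 1 ∨ (z.re + z.im) % 3 = 2 := by lia
  rcases hres with h | h | h <;> simp [sq, Int.mul_emod, h, Int.dvd_iff_emod_eq_zero]

theorem not_dvd_and_not_dvd_of_norm_add_norm_eq {z w : EisensteinInt} {n : ℤ}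
    (h : z.norm + w.norm = 3 * n + 2) : ¬ 3 ∣ z.re + z.im ∧ ¬ 3 ∣ w.re + w.im := by
  have hz := norm_emod_three z
  have hw := norm_emod_three w
  split_ifs at hz hw <;> lia

end EisensteinInt

/-- Coordinates `(a, b), (c, d)` for the pairs of 3-cores of total size `n`. -/
abbrev ThreeCorePairCoords (n : ℕ) :=
  {x : (ℕ × ℕ) × ℕ × ℕ // (threeCore x.1.1 x.1.2).card + (threeCore x.2.1 x.2.2).card = n}

theorem card_threeCorePairCoords (n : ℕ) : Nat.card (ThreeCorePairCoords n) = A3 n := by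
  refine Nat.card_eq_of_bijective
    (fun x => ⟨(threeCore x.1.1.1 x.1.1.2, threeCore x.1.2.1 x.1.2.2), x.2,
      isThreeCore_threeCore _ _, isThreeCore_threeCore _ _⟩) ⟨?_, ?_⟩
  · rintro ⟨⟨⟨a, b⟩, c, d⟩, hx⟩ ⟨⟨⟨a', b'⟩, c', d'⟩, hy⟩ hxy
    simpa [threeCore_inj] using hxy
  · rintro ⟨⟨μ, ν⟩, hcard, hμ, hν⟩
    obtain ⟨a, b, rfl⟩ := exists_threeCore_eq hμ
    obtain ⟨c, d, rfl⟩ := exists_threeCore_eq hν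
    exact ⟨⟨((a, b), c, d), hcard⟩, rfl⟩

namespace EisensteinQuaternion

open EisensteinInt

/-- The quaternion `ζᵏ π(a, b) + ζˡ π(c, d) j`, where `π` stands for `sectorPoint`. -/
def ofCoords (x : (ℕ × ℕ) × ℕ × ℕ) (u : Fin 6 × Fin 6) : EisensteinQuaternion :=
  equivEisensteinProd.symm
    (zeta ^ (u.1 : ℕ) * sectorPoint x.1.1 x.1.2, zeta ^ (u.2 : ℕ) * sectorPoint x.2.1 x.2.2)

theorem ofCoords_inj {x y : (ℕ × ℕ) × ℕ × ℕ} {u v : Fin 6 × Fin 6} :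
    ofCoords x u = ofCoords y v ↔ x = y ∧ u = v := by
  refine ⟨fun heq => ?_, fun ⟨hx, hu⟩ => hx ▸ hu ▸ rfl⟩
  obtain ⟨h₁, h₂⟩ := Prod.ext_iff.1 (equivEisensteinProd.symm.injective heq)
  obtain ⟨hu₁, ha, hb⟩ := zeta_pow_mul_sectorPoint_inj h₁
  obtain ⟨hu₂, hc, hd⟩ := zeta_pow_mul_sectorPoint_inj h₂
  exact ⟨Prod.ext (Prod.ext ha hb) (Prod.ext hc hd), Prod.ext hu₁ hu₂⟩

theorem reducedNorm_ofCoords (x : (ℕ × ℕ) × ℕ × ℕ) (u : Fin 6 × Fin 6) :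
    reducedNorm (ofCoords x u) =
      3 * ((threeCore x.1.1 x.1.2).card + (threeCore x.2.1 x.2.2).card) + 2 := by
  rw [ofCoords, reducedNorm_equivEisensteinProd_symm, norm_zeta_pow_mul_sectorPoint,
    norm_zeta_pow_mul_sectorPoint]
  ring

theorem exists_ofCoords_eq {g : EisensteinQuaternion} {n : ℤ}
    (hg : reducedNorm g = 3 * n + 2) : ∃ x u, ofCoords x u = g := by
  obtain ⟨z, rfl⟩ := equivEisensteinProd.symm.surjective g
  rw [reducedNorm_equivEisensteinProd_symm] at hg
  obtain ⟨h₁, h₂⟩ := not_dvd_and_not_dvd_of_norm_add_norm_eq hg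
  obtain ⟨k, a, b, hk⟩ := exists_zeta_pow_mul_sectorPoint_eq h₁
  obtain ⟨l, c, d, hl⟩ := exists_zeta_pow_mul_sectorPoint_eq h₂
  exact ⟨((a, b), c, d), (k, l), congrArg equivEisensteinProd.symm (Prod.ext hk hl)⟩

theorem ofCoords_mem_normSphere {x : (ℕ × ℕ) × ℕ × ℕ} {u : Fin 6 × Fin 6} {n : ℕ} :
    ofCoords x u ∈ normSphere (3 * n + 2) ↔
      (threeCore x.1.1 x.1.2).card + (threeCore x.2.1 x.2.2).card = n := by
  rw [mem_normSphere, reducedNorm_ofCoords]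
  lia

theorem card_normSphere_three_mul_add_two (n : ℕ) :
    #(normSphere (3 * n + 2)) = 36 * A3 n := by
  have hbij : Nat.card (ThreeCorePairCoords n × Fin 6 × Fin 6) =
      Nat.card (normSphere (3 * n + 2)) := by
    refine Nat.card_eq_of_bijective
      (fun p => ⟨ofCoords p.1.1 p.2, ofCoords_mem_normSphere.2 p.1.2⟩) ⟨?_, ?_⟩
    · rintro ⟨⟨x, hx⟩, u⟩ ⟨⟨y, hy⟩, v⟩ hxy
      simpa [ofCoords_inj] using hxy
    · rintro ⟨g, hg⟩
      obtain ⟨x, u, rfl⟩ := exists_ofCoords_eq (n := n) (by simpa using mem_normSphere.1 hg)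
      exact ⟨(⟨x, ofCoords_mem_normSphere.1 hg⟩, u), rfl⟩
  rw [Nat.card_prod, Nat.card_prod, card_threeCorePairCoords, Nat.card_fin,
    Nat.card_eq_finsetCard] at hbij
  lia

end EisensteinQuaternion

theorem three_mul_A3 (n : ℕ) : 3 * A3 n = σ 1 (3 * n + 2) := by
  have hcores := EisensteinQuaternion.card_normSphere_three_mul_add_two n
  have hquaternions := EisensteinQuaternion.card_normSphere (m := 3 * n + 2) (by lia) (by lia)
  lia

/-- If 3n+2 = ∏ pᵢ^αᵢ is the prime factorization of 3n+2, then
3·A₃(n)·∏(pᵢ − 1) = ∏(pᵢ^{αᵢ+1} − 1). -/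
theorem A3_explicit (n s : ℕ) (p : Fin s → ℕ) (α : Fin s → ℕ)
    (hp : ∀ i, (p i).Prime) (hinj : Function.Injective p)
    (hα : ∀ i, 1 ≤ α i) (hfac : 3 * n + 2 = ∏ i, p i ^ α i) :
    3 * A3 n * ∏ i, (p i - 1) = ∏ i, (p i ^ (α i + 1) - 1) := by
  rw [three_mul_A3, hfac, ArithmeticFunction.isMultiplicative_sigma.map_prod,
    ← prod_mul_distrib]
  · refine prod_congr rfl fun i _ => ?_
    rw [ArithmeticFunction.sigma_one_apply_prime_pow (hp i)]
    exact geom_sum_mul_of_one_le (hp i).one_le _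
  · intro i _ j _ hij
    exact Nat.Coprime.pow _ _ ((Nat.coprime_primes (hp i) (hp j)).2 (hinj.ne hij))
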